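/- arXiv:math/0509470 — 2 statements merged into one kernel-verified Lean document; each statement's English description precedes it below -/
import Mathlib

section
/- For every natural number n ≥ 7, M(n) + p(n−7) ≤ p(n). -/
/-- The product, with multiplicity, of the factorials of the elements of a multiset. -/
def factorialProd (A : Multiset ℕ) : ℕ := (A.map Nat.factorial).prod

/-- `M n`: the number of distinct multinomial coefficients with upper entry `n`, i.e. the
number of distinct values of `∏_{j ∈ λ} j!` as `λ` ranges over the partitions of `n`. -/
noncomputable def M (n : ℕ) : ℕ :=
  Set.ncard {v : ℕ | ∃ P : Nat.Partition n, factorialProd P.parts = v}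

/-- `numPartitions n`: the number of partitions of `n`. -/
noncomputable def numPartitions (n : ℕ) : ℕ := Fintype.card (Nat.Partition n)

/-!
If two distinct multisets `A`, `B` of positive integers have the same sum `s` and the same product
of factorials, then trading `A` for `B` inside a partition of `n` keeps its factorial product. Some
integer occurs more often in one of them, say in `A`, so repeating the trade terminates: every
factorial product is attained by a partition that does not contain `A`. The partitions of `n` that
do contain `A` number `p(n - s)`, whence `M(n) ≤ p(n) - p(n - s)`.
For `s = 7` the collision is `3! 2! 2! = 4! 1! 1! 1!`.
-/

theorem factorialProd_add (A B : Multiset ℕ) :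
    factorialProd (A + B) = factorialProd A * factorialProd B := by
  simp only [factorialProd, Multiset.map_add, Multiset.prod_add]

section Collision

open Finset

variable {A B : Multiset ℕ} {m n : ℕ}

/-- The partition of `n = A.sum + m` obtained by adjoining the elements of `A`, with multiplicity,
to the parts of a partition of `m`. The equation relating `n` and `m` is an argument so that
different multisets of the same sum can be adjoined without casts between partition types. -/
def adjoinParts (hA : ∀ i ∈ A, 0 < i) (h : A.sum + m = n) (R : Nat.Partition m) :
    Nat.Partition n where
  parts := A + R.parts
  parts_pos hi := (Multiset.mem_add.mp hi).elim (hA _) R.parts_pos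
  parts_sum := by rw [Multiset.sum_add, R.parts_sum, h]

theorem adjoinParts_injective (hA : ∀ i ∈ A, 0 < i) (h : A.sum + m = n) :
    Function.Injective (adjoinParts hA h) := fun _ _ hRS =>
  Nat.Partition.ext (add_left_cancel (congrArg Nat.Partition.parts hRS))

theorem exists_parts_eq_add_of_le_parts {P : Nat.Partition n} (hP : A ≤ P.parts) :
    ∃ (m : ℕ) (R : Nat.Partition m), A.sum + m = n ∧ P.parts = A + R.parts := by
  obtain ⟨C, hC⟩ := Multiset.le_iff_exists_add.mp hP
  have hC_pos : ∀ {i}, i ∈ C → 0 < i := fun hi =>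
    P.parts_pos (hC ▸ Multiset.mem_add.mpr (Or.inr hi))
  exact ⟨C.sum, ⟨C, hC_pos, rfl⟩, by rw [← Multiset.sum_add, ← hC, P.parts_sum], hC⟩

theorem card_filter_le_parts (hA : ∀ i ∈ A, 0 < i) (h : A.sum + m = n) :
    #{P : Nat.Partition n | A ≤ P.parts} = numPartitions m := by
  classical
  have himage : ({P | A ≤ P.parts} : Finset (Nat.Partition n)) = univ.image (adjoinParts hA h) := by
    ext P
    simp only [mem_filter_univ, mem_image, mem_univ, true_and]
    constructor
    · intro hP
      obtain ⟨k, R, hk, hR⟩ := exists_parts_eq_add_of_le_parts hP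
      obtain rfl : k = m := add_left_cancel (hk.trans h.symm)
      exact ⟨R, Nat.Partition.ext hR.symm⟩
    · rintro ⟨R, rfl⟩
      exact Multiset.le_add_right A R.parts
  rw [himage, card_image_of_injective univ (adjoinParts_injective hA h), card_univ, numPartitions]

theorem exists_not_le_parts_factorialProd_eq (hB : ∀ i ∈ B, 0 < i) (hsum : A.sum = B.sum)
    (hprod : factorialProd A = factorialProd B) {j : ℕ} (hj : B.count j < A.count j)
    (P : Nat.Partition n) :
    ∃ Q : Nat.Partition n, ¬ A ≤ Q.parts ∧ factorialProd Q.parts = factorialProd P.parts := by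
  induction hk : P.parts.count j using Nat.strong_induction_on generalizing P with
  | _ k ih =>
    by_cases hP : A ≤ P.parts
    · obtain ⟨m, R, hm, hR⟩ := exists_parts_eq_add_of_le_parts hP
      let P' : Nat.Partition n := adjoinParts hB (hsum ▸ hm) R
      have hP'_parts : P'.parts = B + R.parts := rfl
      have hcount : P'.parts.count j < k := by
        rw [← hk, hR, hP'_parts, Multiset.count_add, Multiset.count_add]
        exact Nat.add_lt_add_right hj _
      have hP'_prod : factorialProd P'.parts = factorialProd P.parts := by
        rw [hR, hP'_parts, factorialProd_add, factorialProd_add, hprod]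
      obtain ⟨Q, hQA, hQ⟩ := ih _ hcount P' rfl
      exact ⟨Q, hQA, hQ.trans hP'_prod⟩
    · exact ⟨P, hP, rfl⟩

theorem M_le_card_filter_not_le_parts (hB : ∀ i ∈ B, 0 < i) (hsum : A.sum = B.sum)
    (hprod : factorialProd A = factorialProd B) {j : ℕ} (hj : B.count j < A.count j) :
    M n ≤ #{P : Nat.Partition n | ¬ A ≤ P.parts} := by
  classical
  let S : Finset (Nat.Partition n) := {P | ¬ A ≤ P.parts}
  have hvalues : {v : ℕ | ∃ P : Nat.Partition n, factorialProd P.parts = v} ⊆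
      (S.image fun P => factorialProd P.parts : Finset ℕ) := by
    rintro _ ⟨P, rfl⟩
    obtain ⟨Q, hQA, hQ⟩ := exists_not_le_parts_factorialProd_eq hB hsum hprod hj P
    exact mem_coe.mpr (mem_image.mpr ⟨Q, (mem_filter_univ Q).mpr hQA, hQ⟩)
  calc M n ≤ #(S.image fun P => factorialProd P.parts) :=
        (Set.ncard_le_ncard hvalues (finite_toSet _)).trans_eq (Set.ncard_coe_finset _)
    _ ≤ #S := card_image_le

theorem M_add_numPartitions_le_of_factorialProd_eq (hA : ∀ i ∈ A, 0 < i) (hB : ∀ i ∈ B, 0 < i)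
    (hAB : A ≠ B) (hsum : A.sum = B.sum) (hprod : factorialProd A = factorialProd B)
    (h : A.sum + m = n) : M n + numPartitions m ≤ numPartitions n := by
  obtain ⟨j, hj⟩ : ∃ j, A.count j ≠ B.count j := by
    by_contra! hcount
    exact hAB (Multiset.ext.mpr hcount)
  wlog hlt : B.count j < A.count j generalizing A B
  · exact this hB hA hAB.symm hsum.symm hprod.symm (hsum ▸ h) hj.symm
      (lt_of_le_of_ne (not_lt.mp hlt) hj)
  calc M n + numPartitions m
      ≤ #{P : Nat.Partition n | ¬ A ≤ P.parts} + #{P : Nat.Partition n | A ≤ P.parts} :=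
        add_le_add (M_le_card_filter_not_le_parts hB hsum hprod hlt) (card_filter_le_parts hA h).ge
    _ = numPartitions n := by
        rw [add_comm, card_filter_add_card_filter_not, card_univ, numPartitions]

end Collision

/-- For every `n ≥ 7`, `M(n) + p(n − 7) ≤ p(n)`. -/
theorem M_add_p_sub_seven_le (n : ℕ) (hn : 7 ≤ n) :
    M n + numPartitions (n - 7) ≤ numPartitions n := by
  have hsum : ({3, 2, 2} : Multiset ℕ).sum = 7 := rfl
  exact M_add_numPartitions_le_of_factorialProd_eq (A := {3, 2, 2}) (B := {4, 1, 1, 1})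
    (by decide) (by decide) (by decide) rfl rfl (hsum ▸ Nat.add_sub_cancel' hn)
end

section
/- The sequence of real numbers p_ℙ(n)/A(n) tends to 0 as n tends to infinity, where A(n) = M_{{1}∪ℙ}(n) is the number of distinct multinomial coefficients with upper entry n all of whose lower entries are either 1 or prime. -/
/-- `MS S n`: the number of distinct multinomial coefficients with upper entry `n` and
lower entries in `S`, i.e. the number of distinct values of `∏_{j ∈ λ} j!` as `λ` ranges
over the partitions of `n` with all parts in `S`. -/
noncomputable def MS (S : Set ℕ) (n : ℕ) : ℕ :=
  Set.ncard {v : ℕ | ∃ P : Nat.Partition n, (∀ j ∈ P.parts, j ∈ S) ∧ factorialProd P.parts = v}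

/-- The set of primes. -/
def Primes : Set ℕ := {q | q.Prime}

/-- `pP n`: the number of partitions of `n` all of whose parts are prime. -/
noncomputable def pP (n : ℕ) : ℕ :=
  Set.ncard {P : Nat.Partition n | ∀ j ∈ P.parts, Nat.Prime j}

/-!
Adding ones to a multiset of primes of sum at most `n` gives a partition of `n` into ones and
primes, and a multiset of primes is determined by the product of its factorials, since its largest
element is the largest prime dividing that product. Hence `A(n)` is at least the number `P(n)` of
multisets of primes of sum at most `n`, and it suffices that `p(n) = o(P(n))`, where `p(n)` counts
those of sum exactly `n`. This holds for the multisets over any nonempty set `S` of positive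
integers: fixing `a ∈ S` and `K`, for large `n` every multiset of sum `n` gives rise to at least
`K` multisets of sum at most `n`, in one of three ways.
* If `a` has multiplicity at least `K`, remove fewer than `K` copies of it.
* If `a` has multiplicity less than `K` and some element is at least `K² a`, replace that element
  by `K k` copies of `a`, for `k < K`; the multiplicity of `a` then determines `k`.
* If all elements are less than `K² a`, one of them has large multiplicity and copies of it can be
  removed; which one it was is lost, but there are fewer than `K² a` candidates.
-/

open Filter Asymptotics

open scoped Topology

section Injectivity

theorem factorialProd_cons (a : ℕ) (s : Multiset ℕ) :
    factorialProd (a ::ₘ s) = a.factorial * factorialProd s := by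
  simp only [factorialProd, Multiset.map_cons, Multiset.prod_cons]

theorem prime_dvd_factorialProd_iff {p : ℕ} (hp : p.Prime) {s : Multiset ℕ} :
    p ∣ factorialProd s ↔ ∃ q ∈ s, p ≤ q := by
  constructor
  · intro h
    obtain ⟨q, hq, hpq⟩ := hp.prime.exists_mem_multiset_map_dvd h
    exact ⟨q, hq, hp.dvd_factorial.1 hpq⟩
  · rintro ⟨q, hq, hpq⟩
    exact (hp.dvd_factorial.2 hpq).trans (Multiset.dvd_prod (Multiset.mem_map_of_mem _ hq))

theorem exists_ge_of_factorialProd_eq {s t : Multiset ℕ} (h : factorialProd s = factorialProd t)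
    {p : ℕ} (hp : p.Prime) (hps : p ∈ s) : ∃ q ∈ t, p ≤ q :=
  (prime_dvd_factorialProd_iff hp).1 (h ▸ (prime_dvd_factorialProd_iff hp).2 ⟨p, hps, le_rfl⟩)

theorem exists_mem_inter_of_factorialProd_eq {s t : Multiset ℕ} (hs : ∀ j ∈ s, j ∈ Primes)
    (ht : ∀ j ∈ t, j ∈ Primes) (h : factorialProd s = factorialProd t) (hne : s ≠ 0) :
    ∃ p ∈ s, p ∈ t := by
  obtain ⟨p, hps, hmax⟩ := s.toFinset.exists_max_image id (Multiset.toFinset_nonempty.2 hne)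
  simp only [Multiset.mem_toFinset, id] at hps hmax
  obtain ⟨q, hqt, hpq⟩ := exists_ge_of_factorialProd_eq h (hs p hps) hps
  obtain ⟨r, hrs, hqr⟩ := exists_ge_of_factorialProd_eq h.symm (ht q hqt) hqt
  have hqp : q = p := le_antisymm (hqr.trans (hmax r hrs)) hpq
  exact ⟨p, hps, hqp ▸ hqt⟩

theorem factorialProd_injOn_primes :
    Set.InjOn factorialProd {s | ∀ j ∈ s, j ∈ Primes} := by
  intro s
  induction s using Multiset.strongInductionOn with
  | ih s ih =>
    intro hs t ht h
    rcases eq_or_ne s 0 with rfl | hne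
    · refine (Multiset.eq_zero_of_forall_notMem fun p hp => ?_).symm
      obtain ⟨q, hq, -⟩ := exists_ge_of_factorialProd_eq h.symm (ht p hp) hp
      exact Multiset.notMem_zero q hq
    · obtain ⟨p, hps, hpt⟩ := exists_mem_inter_of_factorialProd_eq hs ht h hne
      rw [← Multiset.cons_erase hps, ← Multiset.cons_erase hpt, factorialProd_cons,
        factorialProd_cons] at h
      have herase : s.erase p = t.erase p :=
        ih _ (Multiset.erase_lt.2 hps) (fun j hj => hs j (Multiset.mem_of_mem_erase hj))
          (fun j hj => ht j (Multiset.mem_of_mem_erase hj))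
          (Nat.eq_of_mul_eq_mul_left p.factorial_pos h)
      rw [← Multiset.cons_erase hps, herase, Multiset.cons_erase hpt]

end Injectivity

/-- The multisets of elements of `S` with sum `n`: for `0 ∉ S`, the partitions of `n` into parts
from `S`, without the dependence of `Nat.Partition n` on `n`. -/
def multisetsSumEq (S : Set ℕ) (n : ℕ) : Set (Multiset ℕ) :=
  {s | (∀ j ∈ s, j ∈ S) ∧ s.sum = n}

/-- The multisets of elements of `S` with sum at most `n`: the partitions of `n` into ones and
parts from `S`, with the ones that fill up the sum left out. -/
def multisetsSumLE (S : Set ℕ) (n : ℕ) : Set (Multiset ℕ) :=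
  {s | (∀ j ∈ s, j ∈ S) ∧ s.sum ≤ n}

section Counting

theorem mul_ncard_le_ncard_of_injective {α β : Type*} {F : Set α} {G : Set β} (hG : G.Finite)
    {K : ℕ} (f : α → ℕ → β) (hmaps : ∀ s ∈ F, ∀ k < K, f s k ∈ G)
    (hinj : ∀ s ∈ F, ∀ k < K, ∀ t ∈ F, ∀ l < K, f s k = f t l → s = t ∧ k = l) :
    K * F.ncard ≤ G.ncard := by
  have hcard : (F ×ˢ Set.Iio K).ncard = K * F.ncard := by
    rw [Set.ncard_prod, mul_comm, ← Finset.coe_Iio, Set.ncard_coe_finset, Nat.card_Iio]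
  rw [← hcard]
  refine Set.ncard_le_ncard_of_injOn (fun x => f x.1 x.2) ?_ ?_ hG
  · rintro ⟨s, k⟩ ⟨hs, hk⟩
    exact hmaps s hs k hk
  · rintro ⟨s, k⟩ ⟨hs, hk⟩ ⟨t, l⟩ ⟨ht, hl⟩ h
    exact Prod.ext_iff.2 (hinj s hs k hk t ht l hl h)

theorem exists_lt_le_count_of_lt_sum {s : Multiset ℕ} {M W : ℕ} (hW : ∀ j ∈ s, j < W)
    (hsum : W * (M * W) < s.sum) : ∃ u < W, M ≤ s.count u := by
  by_contra! hcount
  have hsub : s.toFinset ⊆ Finset.range W := fun j hj =>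
    Finset.mem_range.2 (hW j (Multiset.mem_toFinset.1 hj))
  refine hsum.not_ge ?_
  calc s.sum = ∑ u ∈ Finset.range W, s.count u • u :=
        Finset.sum_multiset_count_of_subset s _ hsub
    _ ≤ ∑ _u ∈ Finset.range W, M * W := Finset.sum_le_sum fun u hu =>
        Nat.mul_le_mul (hcount u (Finset.mem_range.1 hu)).le (Finset.mem_range.1 hu).le
    _ = W * (M * W) := by rw [Finset.sum_const, Finset.card_range, smul_eq_mul]

variable {S : Set ℕ}

theorem multisetsSumLE_finite (h0 : 0 ∉ S) (n : ℕ) : (multisetsSumLE S n).Finite := by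
  refine (Set.finite_range fun x : Σ m : Fin (n + 1), Nat.Partition m => x.2.parts).subset ?_
  rintro s ⟨hs, hsum⟩
  have hpos : ∀ j ∈ s, 0 < j := fun j hj => Nat.pos_of_ne_zero fun h => h0 (h ▸ hs j hj)
  exact ⟨⟨⟨s.sum, Nat.lt_succ_of_le hsum⟩, ⟨s, hpos _, rfl⟩⟩, rfl⟩

theorem multisetsSumEq_finite (h0 : 0 ∉ S) (n : ℕ) : (multisetsSumEq S n).Finite :=
  (multisetsSumLE_finite h0 n).subset fun _ hs => ⟨hs.1, hs.2.le⟩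

theorem mul_ncard_le_count_le (h0 : 0 ∉ S) (n K u : ℕ) :
    K * {s ∈ multisetsSumEq S n | K ≤ s.count u}.ncard ≤ (multisetsSumLE S n).ncard := by
  have hsplit : ∀ s ∈ {s ∈ multisetsSumEq S n | K ≤ s.count u}, ∀ k < K,
      s - Multiset.replicate k u + Multiset.replicate k u = s := fun s hs k hk =>
    tsub_add_cancel_of_le (Multiset.le_count_iff_replicate_le.1 (hk.le.trans hs.2))
  have hsum : ∀ s ∈ {s ∈ multisetsSumEq S n | K ≤ s.count u}, ∀ k < K,
      (s - Multiset.replicate k u).sum + k * u = n := fun s hs k hk => by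
    rw [← hs.1.2, ← smul_eq_mul, ← Multiset.sum_replicate, ← Multiset.sum_add, hsplit s hs k hk]
  refine mul_ncard_le_ncard_of_injective (multisetsSumLE_finite h0 n)
    (fun s k => s - Multiset.replicate k u) (fun s hs k hk => ⟨fun j hj => ?_, ?_⟩) ?_
  · exact hs.1.1 j (Multiset.mem_of_le tsub_le_self hj)
  · exact Nat.le.intro (hsum s hs k hk)
  · intro s hs k hk t ht l hl (h : s - _ = t - _)
    have hu : 0 < u := by
      have hmem : u ∈ s := Multiset.count_pos.1 ((Nat.zero_le k).trans_lt (hk.trans_le hs.2))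
      exact Nat.pos_of_ne_zero fun hu => h0 (hu ▸ hs.1.1 u hmem)
    have hkl : k = l := Nat.eq_of_mul_eq_mul_right hu <|
      Nat.add_left_cancel ((hsum s hs k hk).trans (h ▸ (hsum t ht l hl).symm))
    exact ⟨by rw [← hsplit s hs k hk, h, hkl, hsplit t ht l hl], hkl⟩

theorem mul_ncard_count_lt_and_exists_ge_le (h0 : 0 ∉ S) {a : ℕ} (ha : a ∈ S) (n K : ℕ) :
    K * {s ∈ multisetsSumEq S n | s.count a < K ∧ ∃ b ∈ s, K * K * a ≤ b}.ncard ≤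
      (multisetsSumLE S n).ncard := by
  set F := {s ∈ multisetsSumEq S n | s.count a < K ∧ ∃ b ∈ s, K * K * a ≤ b}
  have hlarge : ∀ s ∈ F, ∃ b ∈ s, K * K * a ≤ b := fun s hs => hs.2.2
  choose! b hbs hb using hlarge
  have hsum : ∀ s ∈ F, b s + (s.erase (b s)).sum = n := fun s hs =>
    (Multiset.sum_erase (hbs s hs)).trans hs.1.2
  have hcount : ∀ s ∈ F, ∀ k, (s.erase (b s) + Multiset.replicate (K * k) a).count a / K = k := by
    intro s hs k
    have hlt : (s.erase (b s)).count a < K :=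
      (Multiset.count_le_of_le a (Multiset.erase_le _ s)).trans_lt hs.2.1
    rw [Multiset.count_add, Multiset.count_replicate_self,
      Nat.add_mul_div_left _ _ (Nat.zero_lt_of_lt hlt), Nat.div_eq_of_lt hlt, zero_add]
  refine mul_ncard_le_ncard_of_injective (multisetsSumLE_finite h0 n)
    (fun s k => s.erase (b s) + Multiset.replicate (K * k) a)
    (fun s hs k hk => ⟨fun j hj => ?_, ?_⟩) ?_
  · rcases Multiset.mem_add.1 hj with hj | hj
    · exact hs.1.1 j (Multiset.mem_of_mem_erase hj)
    · exact Multiset.eq_of_mem_replicate hj ▸ ha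
  · have hle : K * k * a ≤ b s := le_trans (by gcongr) (hb s hs)
    rw [Multiset.sum_add, Multiset.sum_replicate, smul_eq_mul]
    linarith [hsum s hs]
  · intro s hs k _ t ht l _ (h : _ + _ = _ + _)
    have hkl : k = l := by rw [← hcount s hs k, h, hcount t ht l]
    subst hkl
    have herase : s.erase (b s) = t.erase (b t) := add_right_cancel h
    have hbb : b s = b t :=
      Nat.add_right_cancel ((hsum s hs).trans (herase ▸ (hsum t ht).symm))
    exact ⟨by rw [← Multiset.cons_erase (hbs s hs), herase, hbb, Multiset.cons_erase (hbs t ht)],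
      rfl⟩

theorem mul_ncard_exists_lt_le_count_le (h0 : 0 ∉ S) (n M W : ℕ) :
    M * {s ∈ multisetsSumEq S n | ∃ u < W, M ≤ s.count u}.ncard ≤
      W * (multisetsSumLE S n).ncard := by
  have hunion : {s ∈ multisetsSumEq S n | ∃ u < W, M ≤ s.count u} =
      ⋃ u ∈ Finset.range W, {s ∈ multisetsSumEq S n | M ≤ s.count u} := by
    ext s
    simp
  calc M * {s ∈ multisetsSumEq S n | ∃ u < W, M ≤ s.count u}.ncard
      ≤ M * ∑ u ∈ Finset.range W, {s ∈ multisetsSumEq S n | M ≤ s.count u}.ncard := by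
        rw [hunion]
        exact Nat.mul_le_mul_left M (Finset.set_ncard_biUnion_le _ _)
    _ ≤ W * (multisetsSumLE S n).ncard := by
        rw [Finset.mul_sum, ← smul_eq_mul W]
        simpa using Finset.sum_le_card_nsmul (Finset.range W) _ _
          fun u _ => mul_ncard_le_count_le h0 n M u

theorem eventually_mul_ncard_multisetsSumEq_le (h0 : 0 ∉ S) (hne : S.Nonempty) {K : ℕ}
    (hK : 0 < K) :
    ∀ᶠ n in atTop, K * (multisetsSumEq S n).ncard ≤ 3 * (multisetsSumLE S n).ncard := by
  obtain ⟨a, ha⟩ := hne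
  set W := K * K * a
  have hW : 0 < W := Nat.mul_pos (Nat.mul_pos hK hK) (Nat.pos_of_ne_zero fun h => h0 (h ▸ ha))
  filter_upwards [eventually_gt_atTop (W * (K * W * W))] with n hn
  set A := {s ∈ multisetsSumEq S n | K ≤ s.count a}
  set B := {s ∈ multisetsSumEq S n | s.count a < K ∧ ∃ b ∈ s, W ≤ b}
  set C := {s ∈ multisetsSumEq S n | ∃ u < W, K * W ≤ s.count u}
  have hcover : multisetsSumEq S n ⊆ A ∪ B ∪ C := by
    intro s hs
    by_cases hA : K ≤ s.count a
    · exact .inl (.inl ⟨hs, hA⟩)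
    by_cases hB : ∃ b ∈ s, W ≤ b
    · exact .inl (.inr ⟨hs, not_le.1 hA, hB⟩)
    push Not at hB
    exact .inr ⟨hs, exists_lt_le_count_of_lt_sum hB (hs.2.symm ▸ hn)⟩
  have hfin : (A ∪ B ∪ C).Finite := (multisetsSumEq_finite h0 n).subset <|
    Set.union_subset (Set.union_subset (Set.sep_subset _ _) (Set.sep_subset _ _))
      (Set.sep_subset _ _)
  have hABC : (multisetsSumEq S n).ncard ≤ A.ncard + B.ncard + C.ncard :=
    (Set.ncard_le_ncard hcover hfin).trans <| (Set.ncard_union_le _ _).trans <|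
      Nat.add_le_add_right (Set.ncard_union_le _ _) _
  have hA : K * A.ncard ≤ (multisetsSumLE S n).ncard := mul_ncard_le_count_le h0 n K a
  have hB : K * B.ncard ≤ (multisetsSumLE S n).ncard :=
    mul_ncard_count_lt_and_exists_ge_le h0 ha n K
  have hC : K * C.ncard ≤ (multisetsSumLE S n).ncard := by
    refine Nat.le_of_mul_le_mul_left ?_ hW
    rw [← mul_assoc, mul_comm W K]
    exact mul_ncard_exists_lt_le_count_le h0 n (K * W) W
  linarith [Nat.mul_le_mul_left K hABC]

theorem isLittleO_ncard_multisetsSumEq (h0 : 0 ∉ S) (hne : S.Nonempty) :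
    (fun n => ((multisetsSumEq S n).ncard : ℝ)) =o[atTop]
      fun n => ((multisetsSumLE S n).ncard : ℝ) := by
  refine isLittleO_iff_nat_mul_le.2 fun K => ?_
  filter_upwards [eventually_mul_ncard_multisetsSumEq_le h0 hne (K := 3 * (K + 1)) (by positivity)]
    with n hn
  simp only [RCLike.norm_natCast]
  norm_cast
  linarith

end Counting

section Partitions

variable {S : Set ℕ}

theorem ncard_partition_le_ncard_multisetsSumEq (h0 : 0 ∉ S) (n : ℕ) :
    {P : Nat.Partition n | ∀ j ∈ P.parts, j ∈ S}.ncard ≤ (multisetsSumEq S n).ncard :=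
  Set.ncard_le_ncard_of_injOn Nat.Partition.parts (fun P hP => ⟨hP, P.parts_sum⟩)
    (fun _ _ _ _ h => Nat.Partition.ext h) (multisetsSumEq_finite h0 n)

theorem exists_partition_factorialProd_eq (h0 : 0 ∉ S) {n : ℕ} {s : Multiset ℕ}
    (hs : s ∈ multisetsSumLE S n) :
    ∃ P : Nat.Partition n, (∀ j ∈ P.parts, j ∈ {1} ∪ S) ∧
      factorialProd P.parts = factorialProd s := by
  have hmem : ∀ j ∈ s + Multiset.replicate (n - s.sum) 1, j ∈ {1} ∪ S := fun j hj =>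
    (Multiset.mem_add.1 hj).elim (fun h => .inr (hs.1 j h))
      fun h => .inl (Multiset.eq_of_mem_replicate h)
  have hpos : ∀ j ∈ {1} ∪ S, 0 < j := by
    rintro j (rfl | hj)
    · exact one_pos
    · exact Nat.pos_of_ne_zero fun h => h0 (h ▸ hj)
  refine ⟨⟨s + Multiset.replicate (n - s.sum) 1, fun hj => hpos _ (hmem _ hj), ?_⟩, hmem, ?_⟩
  · rw [Multiset.sum_add, Multiset.sum_replicate, smul_eq_mul, mul_one,
      Nat.add_sub_cancel' hs.2]
  · simp [factorialProd]

theorem zero_notMem_of_injOn_factorialProd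
    (hinj : Set.InjOn factorialProd {s | ∀ j ∈ s, j ∈ S}) : 0 ∉ S := fun h0 =>
  Multiset.singleton_ne_zero 0 <|
    hinj (by simpa using h0) (by simp) (by simp [factorialProd])

theorem ncard_multisetsSumLE_le_MS (hinj : Set.InjOn factorialProd {s | ∀ j ∈ s, j ∈ S})
    (n : ℕ) : (multisetsSumLE S n).ncard ≤ MS ({1} ∪ S) n :=
  Set.ncard_le_ncard_of_injOn factorialProd
    (fun _ hs => exists_partition_factorialProd_eq (zero_notMem_of_injOn_factorialProd hinj) hs)
    (fun _ hs _ ht h => hinj hs.1 ht.1 h) ((Set.toFinite _).image _)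

theorem pP_div_A_tendsto_zero_general (hne : S.Nonempty)
    (hinj : Set.InjOn factorialProd {s | ∀ j ∈ s, j ∈ S}) :
    Tendsto (fun n : ℕ => ({P : Nat.Partition n | ∀ j ∈ P.parts, j ∈ S}.ncard : ℝ) /
      (MS ({1} ∪ S) n : ℝ)) atTop (𝓝 0) := by
  have h0 : 0 ∉ S := zero_notMem_of_injOn_factorialProd hinj
  refine IsLittleO.tendsto_div_nhds_zero ?_
  refine (IsBigO.of_norm_le fun n => ?_).trans_isLittleO <|
    (isLittleO_ncard_multisetsSumEq h0 hne).trans_isBigO <| IsBigO.of_norm_le fun n => ?_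
  · simpa using ncard_partition_le_ncard_multisetsSumEq h0 n
  · simpa using ncard_multisetsSumLE_le_MS hinj n

end Partitions

/-- `p_ℙ(n) / A(n) → 0` as `n → ∞`, where `A(n) = M_{{1} ∪ ℙ}(n)` is the number of distinct
multinomial coefficients with upper entry `n` all of whose lower entries are `1` or prime. -/
theorem pP_div_A_tendsto_zero :
    Filter.Tendsto (fun n : ℕ => (pP n : ℝ) / (MS ({1} ∪ Primes) n : ℝ))
      Filter.atTop (nhds 0) := by
  exact pP_div_A_tendsto_zero_general ⟨2, Nat.prime_two⟩ factorialProd_injOn_primes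
end
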